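/- Let d ≥ R ≥ 1, λ : Fin R → ℝ, and let A ∈ ℝ^{d×R} have orthonormal columns with columns a_r. Define the symmetric tensor T(x,y,z) = Σ_{r=1}^{R} λ_r A_{x r} A_{y r} A_{z r}. Let Φ : Fin d × Fin d × Fin d → ℝ and φ ≥ 0 satisfy |Σ_{k,z,u} Φ(k,z,u) x_k y_z w_u| ≤ φ‖x‖‖y‖‖w‖ for all x, y, w ∈ ℝ^d, and let T̂ = T + Φ. Define v̂ ∈ ℝ^d by v̂_k = Σ_{l=1}^{d} T̂(l,l,k) and M̂ ∈ ℝ^{d×d} by M̂_{i j} = Σ_{k=1}^{d} T̂(i,j,k) v̂_k. Then there exists λ' : Fin R → ℝ such that |λ'_r − λ_r²| ≤ |λ_r| · d^{3/2} · φ for every r, and for all x, y ∈ ℝ^d, |xᵀ (M̂ − Σ_{r=1}^{R} λ'_r a_r a_rᵀ) y| ≤ (‖λ‖·φ + d^{3/2}·φ²) · ‖x‖ · ‖y‖, where ‖λ‖ = √(Σ_{r=1}^{R} λ_r²). -/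

import Mathlib

open Matrix BigOperators

/-- Euclidean norm of a finite real vector. -/
noncomputable def eunorm {n : ℕ} (x : Fin n → ℝ) : ℝ := Real.sqrt (∑ i, x i ^ 2)

/-!
The slice traces of `∑ᵣ λᵣ aᵣ ⊗ aᵣ ⊗ aᵣ` form the vector `A λ`, so `v̂ = A λ + w`, where `w`
collects the slice traces of `Φ`. Contracting the third mode of the signal with any vector `v`
only changes its weights, to `λᵣ ⟪aᵣ, v⟫`; for `v = v̂` these are `λ'ᵣ = λᵣ (λᵣ + ⟪aᵣ, w⟫)`. What
remains of `M̂` is `Φ` contracted with `v̂`, of operator norm at most `φ ‖v̂‖ ≤ φ (‖λ‖ + ‖w‖)`.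
Pairing `w` with a vector `u` adds up `d` values of the trilinear form of `Φ`, at the triples
`(eₗ, eₗ, u)`; hence `‖w‖ ≤ d φ`, which improves on `d ^ (3 / 2) φ`.
-/

open WithLp (toLp)

variable {ι ι' κ ρ : Type*}

section Tensor

variable {α : Type*} [CommSemiring α]

/-- The symmetric CP tensor `∑ᵣ cᵣ aᵣ ⊗ aᵣ ⊗ aᵣ`, where `aᵣ` is the `r`-th column of `A`. -/
def cpTensor [Fintype ρ] (c : ρ → α) (A : Matrix ι ρ α) : ι → ι → ι → α :=
  fun i j k => ∑ r, c r * A i r * A j r * A k r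

/-- The second-order analogue `∑ᵣ cᵣ aᵣ aᵣᵀ` of `cpTensor`. -/
def cpMatrix [Fintype ρ] (c : ρ → α) (A : Matrix ι ρ α) : Matrix ι ι α :=
  of fun i j => ∑ r, c r * A i r * A j r

/-- The vector of traces of the third-mode slices of a tensor; `v̂` is `sliceTrace T̂`. -/
def sliceTrace [Fintype ι] (T : ι → ι → κ → α) : κ → α :=
  fun k => ∑ l, T l l k

/-- The contraction of the third mode of a tensor with a vector; `M̂` is `contractThird T̂ v̂`. -/
def contractThird [Fintype κ] (T : ι → ι' → κ → α) (v : κ → α) : Matrix ι ι' α :=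
  of fun i j => ∑ k, T i j k * v k

theorem sliceTrace_add [Fintype ι] (S T : ι → ι → κ → α) :
    sliceTrace (S + T) = sliceTrace S + sliceTrace T :=
  funext fun _ => Finset.sum_add_distrib

theorem contractThird_add [Fintype κ] (S T : ι → ι' → κ → α) (v : κ → α) :
    contractThird (S + T) v = contractThird S v + contractThird T v := by
  ext i j
  simp [contractThird, add_mul, Finset.sum_add_distrib]

variable [Fintype ι] [Fintype ρ]

theorem sliceTrace_cpTensor {A : Matrix ι ρ α} (hA : (Aᵀ * A).diag = 1) (c : ρ → α) :
    sliceTrace (cpTensor c A) = A *ᵥ c := by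
  have hcol (r : ρ) : ∑ l, A l r * A l r = 1 := congrFun hA r
  ext k
  calc ∑ l, ∑ r, c r * A l r * A l r * A k r
      = ∑ r, A k r * c r * ∑ l, A l r * A l r := by
        rw [Finset.sum_comm]
        simp only [Finset.mul_sum]
        exact Finset.sum_congr rfl fun r _ => Finset.sum_congr rfl fun l _ => by ring
    _ = ∑ r, A k r * c r := by simp only [hcol, mul_one]

theorem contractThird_cpTensor (c : ρ → α) (A : Matrix ι ρ α) (v : ι → α) :
    contractThird (cpTensor c A) v = cpMatrix (c * (v ᵥ* A)) A := by
  ext i j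
  simp only [contractThird, cpTensor, cpMatrix, of_apply, Pi.mul_apply, vecMul, dotProduct,
    Finset.sum_mul, Finset.mul_sum]
  rw [Finset.sum_comm]
  exact Finset.sum_congr rfl fun r _ => Finset.sum_congr rfl fun k _ => by ring

end Tensor

theorem norm_toLp_mulVec_of_transpose_mul_self [Fintype ι] [Fintype ρ] [DecidableEq ρ]
    {A : Matrix ι ρ ℝ} (hA : Aᵀ * A = 1) (c : ρ → ℝ) : ‖toLp 2 (A *ᵥ c)‖ = ‖toLp 2 c‖ := by
  simp only [norm_eq_sqrt_real_inner, EuclideanSpace.inner_toLp_toLp, star_trivial]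
  rw [dotProduct_mulVec, vecMul_mulVec, hA, vecMul_one]

theorem norm_toLp_col_of_diag_transpose_mul_self [Fintype ι] {A : Matrix ι ρ ℝ}
    (hA : (Aᵀ * A).diag = 1) (r : ρ) : ‖toLp 2 (A.col r)‖ = 1 := by
  have hcol : A.col r ⬝ᵥ A.col r = 1 := congrFun hA r
  rw [norm_eq_sqrt_real_inner, EuclideanSpace.inner_toLp_toLp, star_trivial, hcol, Real.sqrt_one]

theorem norm_toLp_le_of_abs_dotProduct_le [Fintype κ] {w : κ → ℝ} {C : ℝ} (hC : 0 ≤ C)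
    (h : ∀ u : κ → ℝ, |w ⬝ᵥ u| ≤ C * ‖toLp 2 u‖) : ‖toLp 2 w‖ ≤ C := by
  rw [← innerSL_apply_norm (𝕜 := ℝ)]
  refine ContinuousLinearMap.opNorm_le_bound _ hC fun u => ?_
  simpa [dotProduct_comm, EuclideanSpace.inner_eq_star_dotProduct] using h u.ofLp

/-- The trilinear form of the tensor `Φ` has operator norm at most `φ` for the Euclidean norms.
Vectors are plain functions, so their norms are taken through `toLp 2`. -/
def HasTensorOpNormLE [Fintype ι] [Fintype ι'] [Fintype κ] (Φ : ι → ι' → κ → ℝ) (φ : ℝ) :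
    Prop :=
  ∀ (x : ι → ℝ) (y : ι' → ℝ) (w : κ → ℝ),
    |∑ i, ∑ j, ∑ k, Φ i j k * x i * y j * w k| ≤ φ * ‖toLp 2 x‖ * ‖toLp 2 y‖ * ‖toLp 2 w‖

namespace HasTensorOpNormLE

variable [Fintype ι] [Fintype κ] {φ : ℝ}

theorem abs_sum_contractThird_le [Fintype ι'] {Φ : ι → ι' → κ → ℝ}
    (hΦ : HasTensorOpNormLE Φ φ) (v : κ → ℝ) (x : ι → ℝ) (y : ι' → ℝ) :
    |∑ i, ∑ j, x i * contractThird Φ v i j * y j|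
      ≤ φ * ‖toLp 2 x‖ * ‖toLp 2 y‖ * ‖toLp 2 v‖ := by
  convert hΦ x y v using 5 with i _ j
  rw [contractThird, of_apply, Finset.mul_sum, Finset.sum_mul]
  exact Finset.sum_congr rfl fun k _ => by ring

variable {Φ : ι → ι → κ → ℝ}

theorem abs_diag_dotProduct_le (hΦ : HasTensorOpNormLE Φ φ) (l : ι) (u : κ → ℝ) :
    |Φ l l ⬝ᵥ u| ≤ φ * ‖toLp 2 u‖ := by
  classical
  simpa [dotProduct, Pi.single_apply, ite_mul, mul_ite, Finset.sum_ite_irrel] using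
    hΦ (Pi.single l 1) (Pi.single l 1) u

theorem abs_sliceTrace_dotProduct_le (hΦ : HasTensorOpNormLE Φ φ) (u : κ → ℝ) :
    |sliceTrace Φ ⬝ᵥ u| ≤ Fintype.card ι * φ * ‖toLp 2 u‖ := by
  have hsum : sliceTrace Φ = ∑ l, Φ l l := by
    ext k
    simp [sliceTrace]
  calc |sliceTrace Φ ⬝ᵥ u| = |∑ l, Φ l l ⬝ᵥ u| := by rw [hsum, sum_dotProduct]
    _ ≤ ∑ l, |Φ l l ⬝ᵥ u| := Finset.abs_sum_le_sum_abs _ _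
    _ ≤ ∑ _l : ι, φ * ‖toLp 2 u‖ := Finset.sum_le_sum fun l _ => hΦ.abs_diag_dotProduct_le l u
    _ = Fintype.card ι * φ * ‖toLp 2 u‖ := by simp [mul_assoc]

theorem norm_sliceTrace_le (hΦ : HasTensorOpNormLE Φ φ) (hφ : 0 ≤ φ) :
    ‖toLp 2 (sliceTrace Φ)‖ ≤ Fintype.card ι * φ :=
  norm_toLp_le_of_abs_dotProduct_le (by positivity) hΦ.abs_sliceTrace_dotProduct_le

end HasTensorOpNormLE

section Perturbation

variable [Fintype ι] [Fintype ρ] [DecidableEq ρ] {A : Matrix ι ρ ℝ}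

theorem sliceTrace_cpTensor_add (hA : Aᵀ * A = 1) (lam : ρ → ℝ) (Φ : ι → ι → ι → ℝ) :
    sliceTrace (cpTensor lam A + Φ) = A *ᵥ lam + sliceTrace Φ := by
  rw [sliceTrace_add, sliceTrace_cpTensor (by rw [hA, diag_one])]

theorem norm_sliceTrace_cpTensor_add_le (hA : Aᵀ * A = 1) (lam : ρ → ℝ) {Φ : ι → ι → ι → ℝ}
    {φ : ℝ} (hΦ : HasTensorOpNormLE Φ φ) (hφ : 0 ≤ φ) :
    ‖toLp 2 (sliceTrace (cpTensor lam A + Φ))‖ ≤ ‖toLp 2 lam‖ + Fintype.card ι * φ := by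
  rw [sliceTrace_cpTensor_add hA, WithLp.toLp_add, ← norm_toLp_mulVec_of_transpose_mul_self hA lam]
  exact (norm_add_le _ _).trans (by gcongr; exact hΦ.norm_sliceTrace_le hφ)

theorem sliceTrace_cpTensor_add_vecMul (hA : Aᵀ * A = 1) (lam : ρ → ℝ) (Φ : ι → ι → ι → ℝ) :
    sliceTrace (cpTensor lam A + Φ) ᵥ* A = lam + sliceTrace Φ ᵥ* A := by
  rw [sliceTrace_cpTensor_add hA, add_vecMul, vecMul_mulVec, hA, vecMul_one]

theorem symmetric_init_perturbation_general (lam : ρ → ℝ) (hA : Aᵀ * A = 1)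
    {T Φ : ι → ι → ι → ℝ} (hT : T = cpTensor lam A) {φ : ℝ} (hφ : 0 ≤ φ)
    (hΦ : HasTensorOpNormLE Φ φ) {vhat : ι → ℝ} (hv : vhat = sliceTrace (T + Φ))
    {Mhat : Matrix ι ι ℝ} (hM : Mhat = contractThird (T + Φ) vhat) :
    ∃ lam' : ρ → ℝ,
      (∀ r, |lam' r - lam r ^ 2| ≤ |lam r| * Fintype.card ι * φ) ∧
      ∀ x y : ι → ℝ,
        |∑ i, ∑ j, x i * (Mhat i j - cpMatrix lam' A i j) * y j|
          ≤ (‖toLp 2 lam‖ * φ + Fintype.card ι * φ ^ 2) * ‖toLp 2 x‖ * ‖toLp 2 y‖ := by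
  subst hT
  refine ⟨lam * (vhat ᵥ* A), fun r => ?_, fun x y => ?_⟩
  · have hcol : |(sliceTrace Φ ᵥ* A) r| ≤ Fintype.card ι * φ := by
      have h := hΦ.abs_sliceTrace_dotProduct_le (A.col r)
      rwa [norm_toLp_col_of_diag_transpose_mul_self (by rw [hA, diag_one]), mul_one] at h
    calc |(lam * (vhat ᵥ* A)) r - lam r ^ 2| = |lam r| * |(sliceTrace Φ ᵥ* A) r| := by
          rw [hv, sliceTrace_cpTensor_add_vecMul hA, ← abs_mul, Pi.mul_apply, Pi.add_apply]
          ring_nf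
      _ ≤ |lam r| * Fintype.card ι * φ := by
          rw [mul_assoc]
          gcongr
  · have hresidual : Mhat - cpMatrix (lam * (vhat ᵥ* A)) A = contractThird Φ vhat := by
      rw [hM, contractThird_add, contractThird_cpTensor, add_sub_cancel_left]
    simp only [← Matrix.sub_apply, hresidual]
    calc |∑ i, ∑ j, x i * contractThird Φ vhat i j * y j|
        ≤ φ * ‖toLp 2 x‖ * ‖toLp 2 y‖ * ‖toLp 2 vhat‖ := hΦ.abs_sum_contractThird_le vhat x y
      _ ≤ φ * ‖toLp 2 x‖ * ‖toLp 2 y‖ * (‖toLp 2 lam‖ + Fintype.card ι * φ) := by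
          gcongr
          exact hv ▸ norm_sliceTrace_cpTensor_add_le hA lam hΦ hφ
      _ = (‖toLp 2 lam‖ * φ + Fintype.card ι * φ ^ 2) * ‖toLp 2 x‖ * ‖toLp 2 y‖ := by ring

end Perturbation

theorem eunorm_eq_norm_toLp {n : ℕ} (x : Fin n → ℝ) : eunorm x = ‖toLp 2 x‖ := by
  simp [eunorm, EuclideanSpace.norm_eq]

/-- Perturbation of the trace-based initialization for a noisy symmetric tensor:
`M̂ = Σ_r λ'_r a_r a_rᵀ + Φ_M` with `|λ'_r − λ_r²| ≤ |λ_r| d^{3/2} φ` and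
`‖Φ_M‖_op ≤ ‖λ‖φ + d^{3/2}φ²`. -/
theorem symmetric_init_perturbation
    {d R : ℕ} (hR : 1 ≤ R) (hRd : R ≤ d)
    (lam : Fin R → ℝ) (A : Matrix (Fin d) (Fin R) ℝ) (hA : Aᵀ * A = 1)
    (T Φ : Fin d → Fin d → Fin d → ℝ)
    (hT : ∀ x y z, T x y z = ∑ m, lam m * A x m * A y m * A z m)
    (φ : ℝ) (hφ : 0 ≤ φ)
    (hop : ∀ x y w : Fin d → ℝ,
      |∑ k, ∑ z, ∑ u, Φ k z u * x k * y z * w u| ≤ φ * eunorm x * eunorm y * eunorm w)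
    (vhat : Fin d → ℝ) (hv : ∀ k, vhat k = ∑ l, (T l l k + Φ l l k))
    (Mhat : Matrix (Fin d) (Fin d) ℝ)
    (hM : ∀ i j, Mhat i j = ∑ k, (T i j k + Φ i j k) * vhat k) :
    ∃ lam' : Fin R → ℝ,
      (∀ m, |lam' m - lam m ^ 2| ≤ |lam m| * (d : ℝ) ^ ((3 : ℝ) / 2) * φ) ∧
      ∀ x y : Fin d → ℝ,
        |∑ i, ∑ j, x i * (Mhat i j - ∑ m, lam' m * A i m * A j m) * y j|
          ≤ (Real.sqrt (∑ m, lam m ^ 2) * φ + (d : ℝ) ^ ((3 : ℝ) / 2) * φ ^ 2) *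
              eunorm x * eunorm y := by
  have hd : (d : ℝ) ≤ (d : ℝ) ^ ((3 : ℝ) / 2) :=
    Real.self_le_rpow_of_one_le (mod_cast hR.trans hRd) (by norm_num)
  obtain ⟨lam', hlam, hres⟩ := symmetric_init_perturbation_general lam hA (funext₃ hT) hφ
    (by simpa only [HasTensorOpNormLE, eunorm_eq_norm_toLp] using hop)
    (funext hv) (Matrix.ext hM)
  simp only [← eunorm_eq_norm_toLp, Fintype.card_fin] at hlam hres
  exact ⟨lam', fun m => (hlam m).trans (by gcongr),
    fun x y => (hres x y).trans (by unfold eunorm; gcongr)⟩
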